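/- For all n ≥ 3 and all natural numbers u, v, the number of π ∈ NC(n,3) with area(π) = u and leap(π) = v equals the number of parallelogram polyominoes P ∈ PP(n−2,3) with area(P) = u and bounce(P) = v. (The pair (area, leap) is a combinatorial interpretation of the q,t-Narayana polynomial N_{n,3}(q,t).) -/

import Mathlib

namespace QtN

/-! ### Lattice paths and parallelogram polyominoes -/

/-- A step of a lattice path: east or north. -/
inductive Step : Type
  | E : Step
  | N : Step
  deriving DecidableEq, Repr

/-- Number of east steps of a path. -/
def countE (w : List Step) : ℕ := w.count Step.E

/-- Number of north steps of a path. -/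
def countN (w : List Step) : ℕ := w.count Step.N

/-- Endpoint of a path started at the origin. -/
def pathPos (w : List Step) : ℕ × ℕ := (countE w, countN w)

/-- The set of lattice points visited by a path started at the origin. -/
def pathPts (w : List Step) : Finset (ℕ × ℕ) :=
  ((List.range (w.length + 1)).map (fun i => pathPos (w.take i))).toFinset

/-- `colHeightsAux w h`: for each east step of `w` (in order), the number of north
steps preceding it, starting with `h` north steps already performed. -/
def colHeightsAux : List Step → ℕ → List ℕ
  | [], _ => []
  | Step.E :: r, h => h :: colHeightsAux r h
  | Step.N :: r, h => colHeightsAux r (h + 1)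

/-- Height at which the path `w` crosses the vertical strip `i ≤ x ≤ i + 1`. -/
def colHeight (w : List Step) (i : ℕ) : ℕ := (colHeightsAux w 0).getD i 0

/-- A parallelogram polyomino of size `m × n`: a pair of monotone lattice paths from
`(0,0)` to `(m,n)` (east/north steps), the upper path staying weakly above the lower
path, and the two paths meeting only at `(0,0)` and `(m,n)`. -/
structure Polyomino (m n : ℕ) : Type where
  lower : List Step
  upper : List Step
  lowerE : countE lower = m
  lowerN : countN lower = n
  upperE : countE upper = m
  upperN : countN upper = n
  above : ∀ i < m, colHeight lower i ≤ colHeight upper i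
  meet : pathPts upper ∩ pathPts lower = {(0, 0), (m, n)}

/-- The area statistic: number of unit squares between the two paths,
minus `(m + n - 1)`. -/
def area {m n : ℕ} (P : Polyomino m n) : ℕ :=
  (∑ i ∈ Finset.range m, (colHeight P.upper i - colHeight P.lower i)) - (m + n - 1)

/-- Where an eastward run at height `y`, starting at `x`, first hits the lower path. -/
def eastTarget (hL : ℕ → ℕ) (m x y : ℕ) : ℕ :=
  ((List.range m).filter (fun i => decide (x ≤ i ∧ y ≤ hL i))).headD m

/-- Total bounce contribution: from state `(x, y)` just after the `j`-th east-to-north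
turn (counting the turns made so far), alternately go north until hitting the upper
path and east until hitting the lower path, each step contributing the number of
east-to-north turns preceding it. -/
def bounceAux (hU hL : ℕ → ℕ) (m n : ℕ) : ℕ → ℕ → ℕ → ℕ → ℕ
  | 0, _, _, _ => 0
  | fuel + 1, x, y, j =>
    if x = m ∧ y = n then 0
    else
      let y' := hU (x - 1)
      let x' := if y' = n then m else eastTarget hL m x y'
      (j + 1) * ((y' - y) + (x' - x)) + bounceAux hU hL m n fuel x' y' (j + 1)

/-- The bounce statistic of a parallelogram polyomino: the bounce path starts with a
single east step (contributing `0`) and then alternates north runs (to the ceiling)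
and east runs (to the floor); each step contributes the number of east-to-north turns
preceding it; finally `(m + n - 1)` is subtracted. -/
def bounce {m n : ℕ} (P : Polyomino m n) : ℕ :=
  bounceAux (colHeight P.upper) (colHeight P.lower) m n (m + n + 2) 1 0 0 - (m + n - 1)

/-! ### Set partitions and noncrossing partitions -/

/-- Maximum of a finite set of naturals (`0` for the empty set). -/
def fmax (β : Finset ℕ) : ℕ := β.sup id

/-- Minimum of a finite set of naturals (`0` for the empty set). -/
def fmin (β : Finset ℕ) : ℕ := if h : β.Nonempty then β.min' h else 0

/-- A set partition of `{1, …, n}`, given by its finite set of blocks. -/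
structure SetPartition (n : ℕ) : Type where
  blocks : Finset (Finset ℕ)
  not_empty_mem : ∅ ∉ blocks
  cover : ∀ i : ℕ, i ∈ Finset.Icc 1 n ↔ ∃ β ∈ blocks, i ∈ β
  disjoint : ∀ β ∈ blocks, ∀ γ ∈ blocks, β ≠ γ → Disjoint β γ

/-- A family of blocks is noncrossing if there are no `a < b < c < d` with
`a, c` in one block and `b, d` in a different block. -/
def IsNoncrossing (bs : Finset (Finset ℕ)) : Prop :=
  ∀ a b c d : ℕ, a < b → b < c → c < d →
    ∀ β ∈ bs, ∀ γ ∈ bs, a ∈ β → c ∈ β → b ∈ γ → d ∈ γ → β = γ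

/-- `NC n k`: noncrossing partitions of `{1, …, n}` with exactly `n - k + 1` blocks. -/
abbrev NC (n k : ℕ) : Type :=
  {P : SetPartition n // IsNoncrossing P.blocks ∧ P.blocks.card = n - k + 1}

/-- The skip statistic: `∑_{β} (max β - min β - |β| + 1)`. -/
def skip (bs : Finset (Finset ℕ)) : ℕ :=
  ∑ β ∈ bs, ((fmax β + 1 - fmin β) - β.card)

/-- The non-singleton blocks of a partition. -/
def nsBlocks (bs : Finset (Finset ℕ)) : Finset (Finset ℕ) :=
  bs.filter (fun β => 2 ≤ β.card)

/-- The block of `bs` containing `x` (junk if there is not exactly one). -/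
def blockContaining (bs : Finset (Finset ℕ)) (x : ℕ) : Finset ℕ :=
  (bs.filter (fun β => x ∈ β)).sup id

/-- For a noncrossing partition in `NC n 3`, the quadruple `(a, b, c, d)` describing its
non-singleton blocks: for two pair blocks `{a,b}` and `{c,d}` (with `a` the global
minimum) this is `(a, b, c, d)`; for a single triple block `{a, b, c}` (`a < b < c`)
this is `(a, b, b, c)`. -/
def blockQuad (bs : Finset (Finset ℕ)) : ℕ × ℕ × ℕ × ℕ :=
  let A := blockContaining (nsBlocks bs) (fmin ((nsBlocks bs).sup id))
  if (nsBlocks bs).card = 1 then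
    let l := A.sort (· ≤ ·)
    (l.getD 0 0, l.getD 1 0, l.getD 1 0, l.getD 2 0)
  else
    let B := ((nsBlocks bs).erase A).sup id
    (fmin A, fmax A, fmin B, fmax B)

/-- The leap statistic on `NC n 3`: `leap(ab|cd) = c - 2 + max(0, c - b)`,
and `leap({a,b,c}) = b - 2` (the case `b = c`). -/
def leap (bs : Finset (Finset ℕ)) : ℕ :=
  let (_, b, c, _) := blockQuad bs
  (c - 2) + (c - b)

/-- The skew statistic on `NC n 3`: `skew(ab|cd) = c - 2 + a` if `b < c`, else `c - 2`;
`skew({a,b,c}) = b - 2` (the case `b = c`). -/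
def skew (bs : Finset (Finset ℕ)) : ℕ :=
  let (a, b, c, _) := blockQuad bs
  if b < c then c - 2 + a else c - 2

/-- The mag statistic on `NC n 3`: `mag(ab|cd) = a + max(b, c) - 2 - ⌈(b - a)/2⌉`,
and `mag({a,b,c}) = a + b - 2 - ⌈(b - a)/2⌉` (the case `b = c`). -/
def mag (bs : Finset (Finset ℕ)) : ℕ :=
  let (a, b, c, _) := blockQuad bs
  a + max b c - 2 - (b - a + 1) / 2

/-- The area statistic on noncrossing partitions:
`area(π) = ∑_{β, β' ∈ π} #{ i ∈ β' : i < max β < max β' }` (ordered pairs of blocks). -/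
def ncArea (bs : Finset (Finset ℕ)) : ℕ :=
  ∑ β ∈ bs, ∑ γ ∈ bs, (γ.filter (fun i => i < fmax β ∧ fmax β < fmax γ)).card

/-- The elements of the non-singleton blocks, listed in increasing order, with
the middle element of a size-3 block listed twice. -/
def nsList (bs : Finset (Finset ℕ)) : List ℕ :=
  let l := ((nsBlocks bs).sup id).sort (· ≤ ·)
  if l.length = 3 then [l.getD 0 0, l.getD 1 0, l.getD 1 0, l.getD 2 0] else l

/-- The multiset of block sizes of a partition. -/
def blockSizes (bs : Finset (Finset ℕ)) : Multiset ℕ := bs.val.map Finset.card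

/-- The image of a partition of `{1, …, n}` under the flip `i ↦ n + 1 - i`. -/
def flipBlocks (n : ℕ) (bs : Finset (Finset ℕ)) : Finset (Finset ℕ) :=
  bs.image (fun β => β.image (fun i => n + 1 - i))

/-! ### The mingarc statistic -/

/-- The gaps `ν_r = m_{r+1} - m_r - 1` between consecutive block minima
`m_1 < ⋯ < m_h` (with `m_{h+1} = n + 1`). -/
def nuList (n : ℕ) (bs : Finset (Finset ℕ)) : List ℕ :=
  let ms := ((bs.image fmin).sort (· ≤ ·)) ++ [n + 1]
  (List.range (bs.image fmin).card).map (fun r => ms.getD (r + 1) 0 - ms.getD r 0 - 1)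

/-- Concatenation of `replicate ν c` over a list of pairs `(c, ν)`. -/
def repeatEach : List (ℕ × ℕ) → List ℕ
  | [] => []
  | p :: r => List.replicate p.2 p.1 ++ repeatEach r

/-- The right endpoints `y_1 ≤ ⋯ ≤ y_{k-1}`: each block maximum `c_r` repeated
`ν_r` times, in increasing order. -/
def ysList (n : ℕ) (bs : Finset (Finset ℕ)) : List ℕ :=
  repeatEach (List.zip ((bs.image fmax).sort (· ≤ ·)) (nuList n bs))

/-- The left endpoints `x_1 < ⋯ < x_{k-1}`: the elements of `{1, …, n}` that are not
block maxima, in increasing order. -/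
def xsList (n : ℕ) (bs : Finset (Finset ℕ)) : List ℕ :=
  ((Finset.Icc 1 n).filter (fun i => i ∉ bs.image fmax)).sort (· ≤ ·)

/-- Greedy left-to-right selection of arcs: keep the first arc, and thereafter keep the
earliest arc whose left endpoint exceeds the right endpoint of the last kept arc. -/
def greedyArcs : List (ℕ × ℕ) → Option ℕ → List (ℕ × ℕ)
  | [], _ => []
  | a :: rest, none => a :: greedyArcs rest (some a.2)
  | a :: rest, some r =>
      if r < a.1 then a :: greedyArcs rest (some a.2) else greedyArcs rest (some r)

/-- The mingarc statistic: the sum of `n - y_i` over the greedily selected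
candidate arcs `[x_i, y_i]`. -/
def mingarc (n : ℕ) (bs : Finset (Finset ℕ)) : ℕ :=
  ((greedyArcs (List.zip (xsList n bs) (ysList n bs)) none).map (fun p => n - p.2)).sum

/-! ### The map η from polyominoes to noncrossing partitions -/

/-- Largest column index `i < m` with `colHeight lower i ≤ j`: the rightmost cell
adjacent to the floor in row `j`. -/
def eFloor {m k : ℕ} (P : Polyomino m k) (j : ℕ) : ℕ :=
  (((List.range m).filter (fun i => decide (colHeight P.lower i ≤ j))).getLastD 0)

/-- Smallest column index `i` with `colHeight upper i ≥ j + 1`: the leftmost cell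
adjacent to the ceiling in row `j` (with default `m - 1`). -/
def fCeil {m k : ℕ} (P : Polyomino m k) (j : ℕ) : ℕ :=
  (((List.range m).filter (fun i => decide (j + 1 ≤ colHeight P.upper i))).headD (m - 1))

/-- The number of cells adjacent to the ceiling in row `j`. -/
def rowCount {m k : ℕ} (P : Polyomino m k) (j : ℕ) : ℕ :=
  fCeil P (j + 1) - fCeil P j + 1

/-- Pick, `cnt` times, the largest label in `{1, …, L}` not used yet. -/
def pickRow : ℕ → ℕ → Finset ℕ → Finset ℕ
  | 0, _, _ => ∅
  | cnt + 1, L, used =>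
      let x := fmax ((Finset.Icc 1 L) \ used)
      insert x (pickRow cnt L (insert x used))

/-- The blocks of `η(P)`: label the cells adjacent to the floor `1, …, n` going bottom
to top, left to right (the label of the floor cell in column `i`, row `j` is
`i + j + 1`, and the labels present in rows `≤ j` are exactly `1, …, eFloor P j + j + 1`);
then going bottom to top, left to right over the cells adjacent to the ceiling, assign
to each the largest unused indexing label occurring in the same row or below; the
blocks are the label sets of the ceiling rows. -/
def etaBlocks {m k : ℕ} (P : Polyomino m k) : Finset (Finset ℕ) :=
  (((List.range k).foldl
      (fun st j =>
        let B := pickRow (rowCount P j) (eFloor P j + j + 1) st.1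
        (st.1 ∪ B, B :: st.2))
      ((∅ : Finset ℕ), ([] : List (Finset ℕ)))).2).toFinset

/-!
A partition in `NC n 3` has exactly two elements that are not the largest of their block; the arcs
from these two elements to the maxima of their blocks determine the partition. A polyomino of
height `3` is determined by the four ends of its rows that are not forced. So both sides are
parametrised by quadruples of natural numbers subject to linear inequalities. The area is linear
in the parameters on both sides, the leap is `c - 2` or `2 * c - b - 2` according to whether the
arcs are nested or disjoint, and the bounce is linear on each of the four regions determined by
how often the bounce path turns and at which heights. Matching regions with equal statistics, by
maps that are affine on finitely many pieces, gives the bijection.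
-/

/-! ### Set partitions through block maxima -/

lemma fmax_eq_of_isGreatest {β : Finset ℕ} {a : ℕ} (h : IsGreatest (β : Set ℕ) a) :
    fmax β = a :=
  le_antisymm (Finset.sup_le fun _ hx => h.2 hx) (Finset.le_sup (f := id) h.1)

lemma fmin_eq_of_isLeast {β : Finset ℕ} {a : ℕ} (h : IsLeast (β : Set ℕ) a) : fmin β = a := by
  rw [fmin, dif_pos ⟨a, h.1⟩]
  exact (β.isLeast_min' ⟨a, h.1⟩).unique h

lemma le_fmax {β : Finset ℕ} {i : ℕ} (hi : i ∈ β) : i ≤ fmax β :=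
  Finset.le_sup (f := id) hi

lemma fmax_mem {β : Finset ℕ} (hβ : β.Nonempty) : fmax β ∈ β := by
  rw [fmax_eq_of_isGreatest (β.isGreatest_max' hβ)]
  exact β.max'_mem hβ

namespace SetPartition

variable {n : ℕ} (P : SetPartition n) {β : Finset ℕ} {i : ℕ}

lemma nonempty_of_mem_blocks (hβ : β ∈ P.blocks) : β.Nonempty :=
  Finset.nonempty_iff_ne_empty.2 fun h => P.not_empty_mem (h ▸ hβ)

lemma exists_mem_blocks (hi : i ∈ Finset.Icc 1 n) : ∃ β ∈ P.blocks, i ∈ β :=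
  (P.cover i).1 hi

lemma block_unique {γ : Finset ℕ} (hβ : β ∈ P.blocks) (hγ : γ ∈ P.blocks) (hiβ : i ∈ β)
    (hiγ : i ∈ γ) : β = γ :=
  by_contra fun hne => Finset.disjoint_left.1 (P.disjoint β hβ γ hγ hne) hiβ hiγ

lemma fmax_injOn_blocks : Set.InjOn fmax (P.blocks : Set (Finset ℕ)) := by
  intro β hβ γ hγ h
  have hmem := fmax_mem (P.nonempty_of_mem_blocks hγ)
  exact P.block_unique hβ hγ (h ▸ fmax_mem (P.nonempty_of_mem_blocks hβ)) hmem

lemma blockContaining_eq (hβ : β ∈ P.blocks) (hi : i ∈ β) : blockContaining P.blocks i = β := by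
  have hfilter : P.blocks.filter (i ∈ ·) = {β} := by
    ext γ
    rw [Finset.mem_filter, Finset.mem_singleton]
    exact ⟨fun h => P.block_unique h.1 hβ h.2 hi, fun h => h ▸ ⟨hβ, hi⟩⟩
  rw [blockContaining, hfilter, Finset.sup_singleton, id]

/-- The largest element of the block of `i`. A set partition of `{1, …, n}` is determined by
this map, and the statistics on it are computed from it; outside `{1, …, n}` its value
is `0`. -/
def blockMax (i : ℕ) : ℕ := fmax (blockContaining P.blocks i)

lemma blockMax_eq_fmax (hβ : β ∈ P.blocks) (hi : i ∈ β) : P.blockMax i = fmax β := by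
  rw [blockMax, P.blockContaining_eq hβ hi]

lemma mem_block_iff (hβ : β ∈ P.blocks) :
    i ∈ β ↔ i ∈ Finset.Icc 1 n ∧ P.blockMax i = fmax β := by
  refine ⟨fun hi => ⟨(P.cover i).2 ⟨β, hβ, hi⟩, P.blockMax_eq_fmax hβ hi⟩, fun ⟨hi, hmax⟩ => ?_⟩
  obtain ⟨γ, hγ, hiγ⟩ := P.exists_mem_blocks hi
  rw [P.blockMax_eq_fmax hγ hiγ] at hmax
  exact P.fmax_injOn_blocks hγ hβ hmax ▸ hiγ

lemma le_blockMax (hi : i ∈ Finset.Icc 1 n) : i ≤ P.blockMax i := by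
  obtain ⟨β, hβ, hiβ⟩ := P.exists_mem_blocks hi
  exact P.blockMax_eq_fmax hβ hiβ ▸ le_fmax hiβ

lemma blockMax_mem_Icc (hi : i ∈ Finset.Icc 1 n) : P.blockMax i ∈ Finset.Icc 1 n := by
  obtain ⟨β, hβ, hiβ⟩ := P.exists_mem_blocks hi
  rw [P.blockMax_eq_fmax hβ hiβ, P.cover]
  exact ⟨β, hβ, fmax_mem ⟨i, hiβ⟩⟩

lemma blockMax_blockMax (hi : i ∈ Finset.Icc 1 n) : P.blockMax (P.blockMax i) = P.blockMax i := by
  obtain ⟨β, hβ, hiβ⟩ := P.exists_mem_blocks hi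
  rw [P.blockMax_eq_fmax hβ hiβ, P.blockMax_eq_fmax hβ (fmax_mem ⟨i, hiβ⟩)]

lemma blocks_subset_of_blockMax_eq {P Q : SetPartition n}
    (h : ∀ i ∈ Finset.Icc 1 n, P.blockMax i = Q.blockMax i) : P.blocks ⊆ Q.blocks := by
  intro β hβ
  obtain ⟨i, hi⟩ := P.nonempty_of_mem_blocks hβ
  have hin := ((P.mem_block_iff hβ).1 hi).1
  obtain ⟨γ, hγ, hiγ⟩ := Q.exists_mem_blocks hin
  have hmax : fmax β = fmax γ := by
    rw [← P.blockMax_eq_fmax hβ hi, ← Q.blockMax_eq_fmax hγ hiγ, h i hin]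
  suffices β = γ from this ▸ hγ
  ext j
  rw [P.mem_block_iff hβ, Q.mem_block_iff hγ, hmax]
  exact and_congr_right fun hj => by rw [h j hj]

lemma ext_blockMax {P Q : SetPartition n}
    (h : ∀ i ∈ Finset.Icc 1 n, P.blockMax i = Q.blockMax i) : P = Q := by
  have hblocks : P.blocks = Q.blocks :=
    (blocks_subset_of_blockMax_eq h).antisymm
      (blocks_subset_of_blockMax_eq fun i hi => (h i hi).symm)
  cases P
  cases Q
  congr

lemma isNoncrossing_iff : IsNoncrossing P.blocks ↔
    ∀ a b c d, 1 ≤ a → a < b → b < c → c < d → d ≤ n →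
      P.blockMax a = P.blockMax c → P.blockMax b = P.blockMax d → P.blockMax a = P.blockMax b := by
  constructor
  · intro h a b c d ha hab hbc hcd hd hac hbd
    obtain ⟨β, hβ, haβ⟩ := P.exists_mem_blocks (i := a) (Finset.mem_Icc.2 ⟨ha, by omega⟩)
    obtain ⟨γ, hγ, hbγ⟩ := P.exists_mem_blocks (i := b) (Finset.mem_Icc.2 ⟨by omega, by omega⟩)
    have hβmax := P.blockMax_eq_fmax hβ haβ
    have hγmax := P.blockMax_eq_fmax hγ hbγ
    have hcβ : c ∈ β :=
      (P.mem_block_iff hβ).2 ⟨Finset.mem_Icc.2 ⟨by omega, by omega⟩, hac ▸ hβmax⟩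
    have hdγ : d ∈ γ := (P.mem_block_iff hγ).2 ⟨Finset.mem_Icc.2 ⟨by omega, hd⟩, hbd ▸ hγmax⟩
    rw [hβmax, hγmax, h a b c d hab hbc hcd β hβ γ hγ haβ hcβ hbγ hdγ]
  · intro h a b c d hab hbc hcd β hβ γ hγ ha hc hb hd
    obtain ⟨haI, ha⟩ := (P.mem_block_iff hβ).1 ha
    obtain ⟨hdI, hd⟩ := (P.mem_block_iff hγ).1 hd
    have hc := ((P.mem_block_iff hβ).1 hc).2
    have hb := ((P.mem_block_iff hγ).1 hb).2
    refine P.fmax_injOn_blocks hβ hγ ?_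
    rw [← ha, ← hb]
    exact h a b c d (Finset.mem_Icc.1 haI).1 hab hbc hcd (Finset.mem_Icc.1 hdI).2
      (ha.trans hc.symm) (hb.trans hd.symm)

/-- The elements of `{1, …, n}` that are not the largest of their block. Each `i` among them
carries the arc from `i` to `P.blockMax i`, and these arcs determine `P`. -/
def nonMaxima : Finset ℕ := (Finset.Icc 1 n).filter fun i => P.blockMax i ≠ i

lemma mem_nonMaxima : i ∈ P.nonMaxima ↔ i ∈ Finset.Icc 1 n ∧ P.blockMax i ≠ i :=
  Finset.mem_filter

lemma nonMaxima_subset_Icc : P.nonMaxima ⊆ Finset.Icc 1 n := Finset.filter_subset _ _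

lemma image_fmax_blocks : P.blocks.image fmax = Finset.Icc 1 n \ P.nonMaxima := by
  ext i
  simp only [Finset.mem_image, Finset.mem_sdiff, mem_nonMaxima]
  constructor
  · rintro ⟨β, hβ, rfl⟩
    have hmem := fmax_mem (P.nonempty_of_mem_blocks hβ)
    exact ⟨(P.cover _).2 ⟨β, hβ, hmem⟩, fun h => h.2 (P.blockMax_eq_fmax hβ hmem)⟩
  · rintro ⟨hi, hmax⟩
    obtain ⟨β, hβ, hiβ⟩ := P.exists_mem_blocks hi
    refine ⟨β, hβ, ?_⟩
    rw [← P.blockMax_eq_fmax hβ hiβ]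
    tauto

lemma card_blocks_add_card_nonMaxima : P.blocks.card + P.nonMaxima.card = n := by
  rw [← Finset.card_image_of_injOn P.fmax_injOn_blocks, image_fmax_blocks,
    Finset.card_sdiff_add_card_eq_card P.nonMaxima_subset_Icc, Nat.card_Icc,
    Nat.add_sub_cancel]

lemma sum_blocks {M : Type*} [AddCommMonoid M] (f : ℕ → M) :
    ∑ β ∈ P.blocks, ∑ i ∈ β, f i = ∑ i ∈ Finset.Icc 1 n, f i := by
  have hunion : P.blocks.biUnion id = Finset.Icc 1 n := by
    ext i
    simp only [Finset.mem_biUnion, id, P.cover i]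
  rw [← hunion]
  exact (Finset.sum_biUnion fun β hβ γ hγ hne => P.disjoint β hβ γ hγ hne).symm

lemma ncArea_eq_sum_nonMaxima : ncArea P.blocks =
    ∑ i ∈ P.nonMaxima, (Finset.Ioo i (P.blockMax i) \ P.nonMaxima).card := by
  have hblock : ∀ γ ∈ P.blocks,
      ∑ β ∈ P.blocks, (γ.filter fun i => i < fmax β ∧ fmax β < fmax γ).card =
        ∑ i ∈ γ, (Finset.Ioo i (P.blockMax i) \ P.nonMaxima).card := by
    intro γ hγ
    calc ∑ β ∈ P.blocks, (γ.filter fun i => i < fmax β ∧ fmax β < fmax γ).card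
        = ∑ x ∈ Finset.Icc 1 n \ P.nonMaxima,
            (γ.filter fun i => i < x ∧ x < fmax γ).card := by
          rw [← image_fmax_blocks, Finset.sum_image P.fmax_injOn_blocks]
      _ = ∑ i ∈ γ, ((Finset.Icc 1 n \ P.nonMaxima).filter fun x => i < x ∧ x < fmax γ).card :=
          Finset.sum_card_bipartiteAbove_eq_sum_card_bipartiteBelow _
      _ = ∑ i ∈ γ, (Finset.Ioo i (P.blockMax i) \ P.nonMaxima).card := by
          refine Finset.sum_congr rfl fun i hi => congrArg Finset.card ?_
          obtain ⟨hiI, hmax⟩ := (P.mem_block_iff hγ).1 hi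
          have hmaxI := P.blockMax_mem_Icc hiI
          ext x
          simp only [Finset.mem_filter, Finset.mem_sdiff, Finset.mem_Ioo, Finset.mem_Icc]
            at hiI hmaxI ⊢
          rw [← hmax]
          refine ⟨fun h => ⟨h.2, h.1.2⟩, fun h => ⟨⟨by omega, h.2⟩, h.1⟩⟩
  rw [ncArea, Finset.sum_comm, Finset.sum_congr rfl hblock, P.sum_blocks]
  refine (Finset.sum_subset P.nonMaxima_subset_Icc fun i hi hmax => ?_).symm
  have hfix : P.blockMax i = i := by
    by_contra h
    exact hmax (P.mem_nonMaxima.2 ⟨hi, h⟩)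
  rw [hfix, Finset.Ioo_self, Finset.empty_sdiff, Finset.card_empty]

lemma nsBlocks_eq_image_nonMaxima :
    nsBlocks P.blocks = P.nonMaxima.image (blockContaining P.blocks) := by
  ext β
  simp only [nsBlocks, Finset.mem_filter, Finset.mem_image, mem_nonMaxima]
  constructor
  · rintro ⟨hβ, hcard⟩
    obtain ⟨i, hi, hne⟩ := Finset.exists_mem_ne hcard (fmax β)
    obtain ⟨hiI, hmax⟩ := (P.mem_block_iff hβ).1 hi
    exact ⟨i, ⟨hiI, hmax ▸ hne.symm⟩, P.blockContaining_eq hβ hi⟩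
  · rintro ⟨i, ⟨hi, hne⟩, rfl⟩
    obtain ⟨β, hβ, hiβ⟩ := P.exists_mem_blocks hi
    rw [P.blockMax_eq_fmax hβ hiβ] at hne
    rw [P.blockContaining_eq hβ hiβ]
    exact ⟨hβ, Finset.one_lt_card.2 ⟨_, fmax_mem ⟨i, hiβ⟩, i, hiβ, hne⟩⟩

/-- The partition of `{1, …, n}` into the nonempty fibres of `f`. -/
def ker (n : ℕ) (f : ℕ → ℕ) : SetPartition n where
  blocks := (Finset.Icc 1 n).image fun i => (Finset.Icc 1 n).filter fun j => f j = f i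
  not_empty_mem h := by
    obtain ⟨i, hi, hempty⟩ := Finset.mem_image.1 h
    exact Finset.notMem_empty i (hempty ▸ Finset.mem_filter.2 ⟨hi, rfl⟩)
  cover i := by
    simp only [Finset.exists_mem_image, Finset.mem_filter]
    exact ⟨fun hi => ⟨i, hi, hi, rfl⟩, fun ⟨_, _, hi, _⟩ => hi⟩
  disjoint β hβ γ hγ hne := by
    obtain ⟨i, -, rfl⟩ := Finset.mem_image.1 hβ
    obtain ⟨j, -, rfl⟩ := Finset.mem_image.1 hγ
    refine Finset.disjoint_filter.2 fun k _ hki hkj => hne ?_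
    rw [← hki, hkj]

lemma blockContaining_ker (f : ℕ → ℕ) (hi : i ∈ Finset.Icc 1 n) :
    blockContaining (ker n f).blocks i = (Finset.Icc 1 n).filter fun j => f j = f i :=
  (ker n f).blockContaining_eq (Finset.mem_image_of_mem _ hi) (Finset.mem_filter.2 ⟨hi, rfl⟩)

lemma blockMax_ker {f : ℕ → ℕ} (hmaps : ∀ i ∈ Finset.Icc 1 n, f i ∈ Finset.Icc 1 n)
    (hle : ∀ i ∈ Finset.Icc 1 n, i ≤ f i) (hidem : ∀ i ∈ Finset.Icc 1 n, f (f i) = f i)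
    (hi : i ∈ Finset.Icc 1 n) : (ker n f).blockMax i = f i := by
  rw [blockMax, blockContaining_ker f hi]
  refine fmax_eq_of_isGreatest ⟨Finset.mem_coe.2 (Finset.mem_filter.2 ⟨hmaps i hi, hidem i hi⟩), ?_⟩
  intro j hj
  obtain ⟨hjI, hj⟩ := Finset.mem_filter.1 (Finset.mem_coe.1 hj)
  exact hj ▸ hle j hjI

end SetPartition

lemma blockQuad_of_nsBlocks_eq_triple {bs : Finset (Finset ℕ)} {a b c : ℕ} (hab : a < b)
    (hbc : b < c) (h : nsBlocks bs = {{a, b, c}}) : blockQuad bs = (a, b, b, c) := by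
  have hmin : fmin ({a, b, c} : Finset ℕ) = a := by
    refine fmin_eq_of_isLeast ⟨by simp, fun x hx => ?_⟩
    simp only [Finset.mem_coe, Finset.mem_insert, Finset.mem_singleton] at hx
    omega
  have hblock : blockContaining {{a, b, c}} a = {a, b, c} := by
    rw [blockContaining, Finset.filter_true_of_mem (by simp), Finset.sup_singleton, id]
  have hsort : Finset.sort ({a, b, c} : Finset ℕ) (· ≤ ·) = [a, b, c] := by
    rw [Finset.sort_insert _ (by simp [hab.le, (hab.trans hbc).le])
        (by simp [hab.ne, (hab.trans hbc).ne]),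
      Finset.sort_insert _ (by simp [hbc.le]) (by simp [hbc.ne]), Finset.sort_singleton]
  simp only [blockQuad, h, Finset.card_singleton, Finset.sup_singleton, id, hmin, hblock, hsort,
    if_true, List.getD_cons_zero, List.getD_cons_succ]

lemma fmin_pair {a b : ℕ} (hab : a ≤ b) : fmin {a, b} = a := by
  refine fmin_eq_of_isLeast ?_
  simpa only [Finset.coe_pair, min_eq_left hab] using isLeast_pair (a := a) (b := b)

lemma fmax_pair {a b : ℕ} (hab : a ≤ b) : fmax {a, b} = b := by
  refine fmax_eq_of_isGreatest ?_
  simpa only [Finset.coe_pair, max_eq_right hab] using isGreatest_pair (a := a) (b := b)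

lemma blockQuad_of_nsBlocks_eq_pair {bs : Finset (Finset ℕ)} {a b c d : ℕ} (hab : a < b)
    (hcd : c < d) (hac : a < c) (h : nsBlocks bs = {{a, b}, {c, d}}) :
    blockQuad bs = (a, b, c, d) := by
  have ha : a ∉ ({c, d} : Finset ℕ) := by simp [hac.ne, (hac.trans hcd).ne]
  have hne : ({a, b} : Finset ℕ) ≠ {c, d} := fun h => ha (h ▸ Finset.mem_insert_self a _)
  have hmin : fmin (({{a, b}, {c, d}} : Finset (Finset ℕ)).sup id) = a := by
    refine fmin_eq_of_isLeast ⟨by simp, fun x hx => ?_⟩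
    simp only [Finset.sup_insert, Finset.sup_singleton, id, Finset.sup_eq_union, Finset.mem_coe,
      Finset.mem_union, Finset.mem_insert, Finset.mem_singleton] at hx
    omega
  have hblock : blockContaining {{a, b}, {c, d}} a = {a, b} := by
    rw [blockContaining, Finset.filter_insert, Finset.filter_singleton, if_pos (by simp),
      if_neg ha, insert_empty_eq, Finset.sup_singleton, id]
  have herase : ({{a, b}, {c, d}} : Finset (Finset ℕ)).erase {a, b} = {{c, d}} :=
    Finset.erase_insert (by simpa using hne)
  simp only [blockQuad, h, Finset.card_pair hne, hmin, hblock, herase, Finset.sup_singleton, id,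
    fmin_pair hab.le, fmax_pair hab.le, fmin_pair hcd.le, fmax_pair hcd.le,
    OfNat.ofNat_ne_one, if_false]

/-! ### Noncrossing partitions with two arcs -/

/-- The arcs `a → b` and `c → d` joining the two non-maximal elements of a partition in
`NC n 3` to the maxima of their blocks, in increasing order of the starting points. The
pairs `ab|cd` have `b ≠ d`; a triple block `{x < y < z}` is the case `b = d`, encoded as
`(a, b, c, d) = (x, z, y, z)`. -/
@[ext]
structure ArcPair (n : ℕ) where
  a : ℕ
  b : ℕ
  c : ℕ
  d : ℕ
  valid : 1 ≤ a ∧ a < b ∧ b ≤ n ∧ a < c ∧ c < d ∧ d ≤ n ∧ (b < c ∨ d ≤ b)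

namespace ArcPair

variable {n : ℕ} (t : ArcPair n)

/-- The map sending the start of each arc to its end and fixing everything else. -/
def arcMap (i : ℕ) : ℕ := if i = t.a then t.b else if i = t.c then t.d else i

lemma arcMap_a : t.arcMap t.a = t.b := if_pos rfl

lemma arcMap_c : t.arcMap t.c = t.d := by
  have := t.valid
  rw [arcMap, if_neg (by omega), if_pos rfl]

/-- The noncrossing partition with the given arcs. -/
def toSetPartition : SetPartition n := SetPartition.ker n t.arcMap

lemma blockMax_toSetPartition {i : ℕ} (hi : i ∈ Finset.Icc 1 n) :
    t.toSetPartition.blockMax i = t.arcMap i := by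
  have := t.valid
  refine SetPartition.blockMax_ker ?_ ?_ ?_ hi <;> intro j hj <;>
    simp only [arcMap, Finset.mem_Icc] at hj ⊢ <;> split_ifs <;> omega

lemma nonMaxima_toSetPartition : t.toSetPartition.nonMaxima = {t.a, t.c} := by
  have := t.valid
  ext i
  rw [SetPartition.mem_nonMaxima, and_congr_right fun hi => by rw [t.blockMax_toSetPartition hi]]
  simp only [arcMap, Finset.mem_Icc, Finset.mem_insert, Finset.mem_singleton]
  split_ifs <;> omega

lemma a_mem_Icc : t.a ∈ Finset.Icc 1 n := by
  have := t.valid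
  exact Finset.mem_Icc.2 ⟨by omega, by omega⟩

lemma c_mem_Icc : t.c ∈ Finset.Icc 1 n := by
  have := t.valid
  exact Finset.mem_Icc.2 ⟨by omega, by omega⟩

lemma isNoncrossing_toSetPartition : IsNoncrossing t.toSetPartition.blocks := by
  have := t.valid
  rw [SetPartition.isNoncrossing_iff]
  intro w x y z hw hwx hxy hyz hz
  rw [t.blockMax_toSetPartition (Finset.mem_Icc.2 ⟨hw, by omega⟩),
    t.blockMax_toSetPartition (Finset.mem_Icc.2 ⟨by omega, by omega⟩),
    t.blockMax_toSetPartition (Finset.mem_Icc.2 ⟨by omega, by omega⟩),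
    t.blockMax_toSetPartition (Finset.mem_Icc.2 ⟨by omega, hz⟩)]
  simp only [arcMap]
  split_ifs <;> omega

lemma card_blocks_toSetPartition : t.toSetPartition.blocks.card = n - 3 + 1 := by
  have := t.valid
  have hcard := t.toSetPartition.card_blocks_add_card_nonMaxima
  rw [nonMaxima_toSetPartition, Finset.card_pair (by omega)] at hcard
  omega

/-- The noncrossing partition with the given arcs, as an element of `NC n 3`. -/
def toNC : NC n 3 :=
  ⟨t.toSetPartition, t.isNoncrossing_toSetPartition, t.card_blocks_toSetPartition⟩

lemma toNC_injective : Function.Injective (toNC (n := n)) := by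
  intro t t' h
  have hP : t.toSetPartition = t'.toSetPartition := congrArg Subtype.val h
  have hstart : ({t.a, t.c} : Finset ℕ) = {t'.a, t'.c} := by
    rw [← nonMaxima_toSetPartition, hP, nonMaxima_toSetPartition]
  have hac : t.a = t'.a ∧ t.c = t'.c := by
    have := t.valid
    have := t'.valid
    rw [← Finset.coe_inj, Finset.coe_pair, Finset.coe_pair, Set.pair_eq_pair_iff] at hstart
    omega
  have hb : t.b = t'.b := by
    rw [← arcMap_a, ← t.blockMax_toSetPartition t.a_mem_Icc, hP,
      t'.blockMax_toSetPartition t.a_mem_Icc, hac.1, arcMap_a]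
  have hd : t.d = t'.d := by
    rw [← arcMap_c, ← t.blockMax_toSetPartition t.c_mem_Icc, hP,
      t'.blockMax_toSetPartition t.c_mem_Icc, hac.2, arcMap_c]
  exact ArcPair.ext hac.1 hb hac.2 hd

lemma exists_eq_toSetPartition {P : SetPartition n} (hP : IsNoncrossing P.blocks) {a c : ℕ}
    (hac : a < c) (hmaxima : P.nonMaxima = {a, c}) : ∃ t : ArcPair n, t.toSetPartition = P := by
  have hmem : ∀ i, i ∈ Finset.Icc 1 n ∧ P.blockMax i ≠ i ↔ i = a ∨ i = c := fun i => by
    rw [← P.mem_nonMaxima, hmaxima, Finset.mem_insert, Finset.mem_singleton]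
  obtain ⟨ha, hab⟩ := (hmem a).2 (Or.inl rfl)
  obtain ⟨hc, hcd⟩ := (hmem c).2 (Or.inr rfl)
  have hbc : P.blockMax a ≠ c := fun h => hcd (h ▸ P.blockMax_blockMax ha)
  have hncr : ¬(c < P.blockMax a ∧ P.blockMax a < P.blockMax c) := by
    rintro ⟨h₁, h₂⟩
    have := (P.isNoncrossing_iff.1 hP) a c _ _ (Finset.mem_Icc.1 ha).1 hac h₁ h₂
      (Finset.mem_Icc.1 (P.blockMax_mem_Icc hc)).2 (P.blockMax_blockMax ha).symm
      (P.blockMax_blockMax hc).symm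
    omega
  have hvalid : 1 ≤ a ∧ a < P.blockMax a ∧ P.blockMax a ≤ n ∧ a < c ∧ c < P.blockMax c ∧
      P.blockMax c ≤ n ∧ (P.blockMax a < c ∨ P.blockMax c ≤ P.blockMax a) := by
    have := P.le_blockMax ha
    have := P.le_blockMax hc
    have := Finset.mem_Icc.1 (P.blockMax_mem_Icc ha)
    have := Finset.mem_Icc.1 (P.blockMax_mem_Icc hc)
    have := Finset.mem_Icc.1 ha
    omega
  refine ⟨⟨a, P.blockMax a, c, P.blockMax c, hvalid⟩, SetPartition.ext_blockMax fun i hi => ?_⟩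
  rw [blockMax_toSetPartition _ hi, arcMap]
  split_ifs with hia hic
  · rw [hia]
  · rw [hic]
  · by_contra h
    exact ((hmem i).1 ⟨hi, Ne.symm h⟩).elim hia hic

lemma toNC_surjective (hn : 3 ≤ n) : Function.Surjective (toNC (n := n)) := by
  rintro ⟨P, hP, hcard⟩
  have hsum := P.card_blocks_add_card_nonMaxima
  obtain ⟨x, y, hxy, hmaxima⟩ := Finset.card_eq_two.1 (show P.nonMaxima.card = 2 by omega)
  obtain ⟨t, ht⟩ : ∃ t : ArcPair n, t.toSetPartition = P := by
    rcases hxy.lt_or_gt with hlt | hgt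
    · exact exists_eq_toSetPartition hP hlt hmaxima
    · exact exists_eq_toSetPartition hP hgt (Finset.pair_comm x y ▸ hmaxima)
  exact ⟨t, Subtype.ext ht⟩

/-- A partition in `NC n 3` amounts to its two arcs. -/
noncomputable def equivNC (hn : 3 ≤ n) : ArcPair n ≃ NC n 3 :=
  Equiv.ofBijective toNC ⟨toNC_injective, toNC_surjective hn⟩

/-- The area of the noncrossing partition with the given arcs: each arc counts the block
maxima strictly under it, and under `a → b` the start `c` of a nested arc is not one. -/
def area : ℕ := (t.b - t.a - 1) + (t.d - t.c - 1) - if t.c < t.b then 1 else 0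

/-- The leap of the noncrossing partition with the given arcs; the truncated difference
`c - b` is the paper's `max (0, c - b)`. -/
def leap : ℕ := (t.c - 2) + (t.c - t.b)

lemma card_Ioo_a_b_sdiff :
    (Finset.Ioo t.a t.b \ {t.a, t.c}).card = t.b - t.a - 1 - if t.c < t.b then 1 else 0 := by
  have := t.valid
  rw [Finset.sdiff_insert_of_notMem Finset.left_notMem_Ioo, Finset.sdiff_singleton_eq_erase,
    Finset.card_erase_eq_ite, Nat.card_Ioo]
  simp only [Finset.mem_Ioo]
  split_ifs <;> omega

lemma card_Ioo_c_d_sdiff : (Finset.Ioo t.c t.d \ {t.a, t.c}).card = t.d - t.c - 1 := by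
  have := t.valid
  have ha : t.a ∉ Finset.Ioo t.c t.d := fun h => by have := Finset.mem_Ioo.1 h; omega
  rw [Finset.sdiff_insert_of_notMem ha, Finset.sdiff_singleton_eq_erase,
    Finset.erase_eq_of_notMem Finset.left_notMem_Ioo, Nat.card_Ioo]

lemma ncArea_toSetPartition : ncArea t.toSetPartition.blocks = t.area := by
  have := t.valid
  rw [SetPartition.ncArea_eq_sum_nonMaxima, nonMaxima_toSetPartition,
    Finset.sum_pair (by omega), t.blockMax_toSetPartition t.a_mem_Icc,
    t.blockMax_toSetPartition t.c_mem_Icc, arcMap_a, arcMap_c, card_Ioo_a_b_sdiff,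
    card_Ioo_c_d_sdiff, area]
  split_ifs <;> omega

lemma nsBlocks_toSetPartition : nsBlocks t.toSetPartition.blocks =
    if t.b = t.d then {{t.a, t.c, t.b}} else {{t.a, t.b}, {t.c, t.d}} := by
  have := t.valid
  rw [SetPartition.nsBlocks_eq_image_nonMaxima, nonMaxima_toSetPartition, Finset.image_insert,
    Finset.image_singleton, toSetPartition, SetPartition.blockContaining_ker _ t.a_mem_Icc,
    SetPartition.blockContaining_ker _ t.c_mem_Icc, arcMap_a, arcMap_c]
  split_ifs with hbd
  · rw [hbd, Finset.pair_eq_singleton]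
    congr 1
    ext i
    rw [Finset.mem_filter]
    simp only [arcMap, Finset.mem_Icc, Finset.mem_insert, Finset.mem_singleton]
    split_ifs <;> omega
  · congr 2 <;> ext i <;> rw [Finset.mem_filter] <;>
      simp only [arcMap, Finset.mem_Icc, Finset.mem_insert, Finset.mem_singleton] <;>
      split_ifs <;> omega

lemma leap_toSetPartition : QtN.leap t.toSetPartition.blocks = t.leap := by
  have := t.valid
  have hns := t.nsBlocks_toSetPartition
  split_ifs at hns with hbd
  · rw [QtN.leap, blockQuad_of_nsBlocks_eq_triple (by omega) (by omega) hns, leap]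
    exact congrArg (t.c - 2 + ·) (by omega : t.c - t.c = t.c - t.b)
  · rw [QtN.leap, blockQuad_of_nsBlocks_eq_pair (by omega) (by omega) (by omega) hns, leap]

end ArcPair

/-! ### Lattice paths through their north steps -/

@[simp] lemma countE_nil : countE [] = 0 := List.count_nil

@[simp] lemma countN_nil : countN [] = 0 := List.count_nil

@[simp] lemma countE_east (w : List Step) : countE (Step.E :: w) = countE w + 1 :=
  List.count_cons_self

@[simp] lemma countN_east (w : List Step) : countN (Step.E :: w) = countN w :=
  List.count_cons_of_ne (by decide)

@[simp] lemma countE_north (w : List Step) : countE (Step.N :: w) = countE w :=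
  List.count_cons_of_ne (by decide)

@[simp] lemma countN_north (w : List Step) : countN (Step.N :: w) = countN w + 1 :=
  List.count_cons_self

/-- The abscissas of the north steps of a path, in order. Together with the number of east
steps they determine the path. -/
def northCols : List Step → List ℕ
  | [] => []
  | Step.E :: w => (northCols w).map (· + 1)
  | Step.N :: w => 0 :: northCols w

lemma length_northCols (w : List Step) : (northCols w).length = countN w := by
  induction w with
  | nil => rfl
  | cons s w ih => cases s <;> simp [northCols, ih]

lemma pairwise_northCols (w : List Step) : (northCols w).Pairwise (· ≤ ·) := by
  induction w with
  | nil => exact List.Pairwise.nil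
  | cons s w ih =>
    cases s with
    | E => exact ih.map _ fun _ _ h => Nat.succ_le_succ h
    | N => exact List.pairwise_cons.2 ⟨fun _ _ => Nat.zero_le _, ih⟩

lemma le_countE_of_mem_northCols {w : List Step} {c : ℕ} (hc : c ∈ northCols w) :
    c ≤ countE w := by
  induction w generalizing c with
  | nil => exact absurd hc List.not_mem_nil
  | cons s w ih =>
    cases s with
    | E =>
      obtain ⟨a, ha, rfl⟩ := List.mem_map.1 hc
      exact countE_east w ▸ Nat.succ_le_succ (ih ha)
    | N =>
      rw [countE_north]
      rcases List.mem_cons.1 hc with rfl | hc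
      · exact Nat.zero_le _
      · exact ih hc

/-- The path from abscissa `x` to abscissa `m` whose north steps have abscissas `cs`. -/
def pathFrom (m x : ℕ) : List ℕ → List Step
  | [] => List.replicate (m - x) Step.E
  | c :: cs => List.replicate (c - x) Step.E ++ Step.N :: pathFrom m c cs

lemma pathFrom_map_succ (m x : ℕ) (cs : List ℕ) :
    pathFrom (m + 1) (x + 1) (cs.map (· + 1)) = pathFrom m x cs := by
  induction cs generalizing x with
  | nil => simp [pathFrom]
  | cons c cs ih => simp [pathFrom, ih]

lemma pathFrom_zero_map_succ (m : ℕ) (cs : List ℕ) :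
    pathFrom (m + 1) 0 (cs.map (· + 1)) = Step.E :: pathFrom m 0 cs := by
  cases cs <;> simp [pathFrom, pathFrom_map_succ, List.replicate_succ]

lemma pathFrom_northCols (w : List Step) : pathFrom (countE w) 0 (northCols w) = w := by
  induction w with
  | nil => rfl
  | cons s w ih =>
    cases s with
    | E => rw [northCols, countE_east, pathFrom_zero_map_succ, ih]
    | N => rw [northCols, countE_north, pathFrom, ih, Nat.sub_self, List.replicate_zero,
        List.nil_append]

lemma eq_of_northCols_eq {w w' : List Step} (hE : countE w = countE w')
    (hcols : northCols w = northCols w') : w = w' := by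
  rw [← pathFrom_northCols w, hE, hcols, pathFrom_northCols]

lemma countE_replicate_append (k : ℕ) (w : List Step) :
    countE (List.replicate k Step.E ++ w) = k + countE w := by
  rw [countE, List.count_append, List.count_replicate_self, countE]

lemma northCols_replicate_append (k : ℕ) (w : List Step) :
    northCols (List.replicate k Step.E ++ w) = (northCols w).map (· + k) := by
  induction k with
  | zero => simp
  | succ k ih => simp [List.replicate_succ, northCols, ih, Function.comp_def, add_assoc]

lemma countE_pathFrom {m x : ℕ} {cs : List ℕ} (hcs : (x :: cs).Pairwise (· ≤ ·))
    (hm : ∀ c ∈ x :: cs, c ≤ m) : countE (pathFrom m x cs) = m - x := by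
  induction cs generalizing x with
  | nil => exact List.count_replicate_self
  | cons c cs ih =>
    obtain ⟨hx, hcs⟩ := List.pairwise_cons.1 hcs
    have hm' := fun a ha => hm a (List.mem_cons_of_mem _ ha)
    have hxc := hx c List.mem_cons_self
    have hcm := hm' c List.mem_cons_self
    rw [pathFrom, countE_replicate_append, countE_north, ih hcs hm']
    omega

lemma northCols_pathFrom (m : ℕ) {x : ℕ} {cs : List ℕ} (hcs : (x :: cs).Pairwise (· ≤ ·)) :
    northCols (pathFrom m x cs) = cs.map (· - x) := by
  induction cs generalizing x with
  | nil => simpa [northCols, pathFrom] using northCols_replicate_append (m - x) []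
  | cons c cs ih =>
    obtain ⟨hx, hcs⟩ := List.pairwise_cons.1 hcs
    have hxc := hx c List.mem_cons_self
    have hshift : ∀ a ∈ cs, a - c + (c - x) = a - x := fun a ha => by
      have := (List.pairwise_cons.1 hcs).1 a ha
      omega
    rw [pathFrom, northCols_replicate_append, northCols, ih hcs, List.map_cons, List.map_cons,
      List.map_map, zero_add]
    exact congrArg _ (List.map_congr_left hshift)

lemma colHeightsAux_succ (w : List Step) (h : ℕ) :
    colHeightsAux w (h + 1) = (colHeightsAux w h).map (· + 1) := by
  induction w generalizing h with
  | nil => rfl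
  | cons s w ih => cases s <;> simp [colHeightsAux, ih]

lemma length_colHeightsAux (w : List Step) (h : ℕ) : (colHeightsAux w h).length = countE w := by
  induction w generalizing h with
  | nil => rfl
  | cons s w ih => cases s <;> simp [colHeightsAux, ih]

lemma colHeight_eq_countP {w : List Step} {i : ℕ} (hi : i < countE w) :
    colHeight w i = (northCols w).countP (· ≤ i) := by
  induction w generalizing i with
  | nil => exact absurd hi (Nat.not_lt_zero i)
  | cons s w ih =>
    cases s with
    | E =>
      cases i with
      | zero => simp [colHeight, colHeightsAux, northCols, List.countP_map, Function.comp_def]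
      | succ i =>
        have hi' : i < countE w := by simpa using hi
        have hshift : colHeight (Step.E :: w) (i + 1) = colHeight w i := by
          rw [colHeight, colHeightsAux, List.getD_cons_succ, colHeight]
        simp [hshift, ih hi', northCols, List.countP_map, Function.comp_def]
    | N =>
      have hi' : i < countE w := by simpa using hi
      have hlen : i < (colHeightsAux w 0).length := by rwa [length_colHeightsAux]
      have hshift : colHeight (Step.N :: w) i = colHeight w i + 1 := by
        rw [colHeight, colHeightsAux, colHeightsAux_succ, List.getD_eq_getElem _ _ (by simpa),
          List.getElem_map, ← List.getD_eq_getElem _ 0 hlen, colHeight]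
      simp [hshift, ih hi', northCols]

/-- The unit squares below the path and those above it fill the bounding box. -/
lemma sum_colHeight_add_sum_northCols (w : List Step) :
    ∑ i ∈ Finset.range (countE w), colHeight w i + (northCols w).sum = countE w * countN w := by
  have hcount (cs : List ℕ) {m : ℕ} (hcs : ∀ c ∈ cs, c ≤ m) :
      ∑ i ∈ Finset.range m, cs.countP (· ≤ i) + cs.sum = m * cs.length := by
    induction cs with
    | nil => simp
    | cons c cs ih =>
      have hc := hcs c List.mem_cons_self
      have ih := ih fun a ha => hcs a (List.mem_cons_of_mem _ ha)
      have hfilter : (Finset.range m).filter (c ≤ ·) = Finset.Ico c m := by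
        ext i
        simp [and_comm]
      simp only [List.countP_cons, decide_eq_true_eq, Finset.sum_add_distrib,
        ← Finset.card_filter, hfilter, Nat.card_Ico, List.sum_cons, List.length_cons,
        Nat.mul_succ]
      omega
  rw [← length_northCols, ← hcount (northCols w) fun _ => le_countE_of_mem_northCols]
  exact congrArg (· + _) (Finset.sum_congr rfl fun i hi =>
    colHeight_eq_countP (Finset.mem_range.1 hi))

lemma area_eq {m n : ℕ} (P : Polyomino m n) :
    area P = (northCols P.lower).sum - (northCols P.upper).sum - (m + n - 1) := by
  have hlower := sum_colHeight_add_sum_northCols P.lower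
  have hupper := sum_colHeight_add_sum_northCols P.upper
  rw [P.lowerE, P.lowerN] at hlower
  rw [P.upperE, P.upperN] at hupper
  rw [area, Finset.sum_tsub_distrib _ fun i hi => P.above i (Finset.mem_range.1 hi)]
  omega

lemma pathPos_cons (s : Step) (w : List Step) : pathPos (s :: w) = pathPos [s] + pathPos w := by
  cases s <;> simp [pathPos, add_comm]

lemma mem_pathPts_iff_exists_take {w : List Step} {z : ℕ × ℕ} :
    z ∈ pathPts w ↔ ∃ i ≤ w.length, pathPos (w.take i) = z := by
  simp [pathPts]

lemma mem_pathPts_cons {s : Step} {w : List Step} {z : ℕ × ℕ} :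
    z ∈ pathPts (s :: w) ↔ z = 0 ∨ ∃ z' ∈ pathPts w, pathPos [s] + z' = z := by
  simp only [mem_pathPts_iff_exists_take]
  constructor
  · rintro ⟨_ | i, hi, rfl⟩
    · exact Or.inl rfl
    · exact Or.inr ⟨_, ⟨i, Nat.le_of_succ_le_succ hi, rfl⟩, (pathPos_cons s _).symm⟩
  · rintro (rfl | ⟨_, ⟨i, hi, rfl⟩, rfl⟩)
    · exact ⟨0, Nat.zero_le _, rfl⟩
    · exact ⟨i + 1, Nat.succ_le_succ hi, pathPos_cons s _⟩

lemma mem_pathPts {w : List Step} {x y : ℕ} : (x, y) ∈ pathPts w ↔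
    x ≤ countE w ∧ (northCols w).countP (· < x) ≤ y ∧ y ≤ (northCols w).countP (· ≤ x) := by
  induction w generalizing x y with
  | nil => simp [pathPts, pathPos, northCols]
  | cons s w ih =>
    rw [mem_pathPts_cons]
    cases s with
    | E =>
      cases x with
      | zero => simp [pathPos, northCols, List.countP_map, Function.comp_def, Prod.ext_iff,
          Nat.add_comm 1]
      | succ x =>
        have hpred : (∃ z' ∈ pathPts w, pathPos [Step.E] + z' = (x + 1, y)) ↔
            (x, y) ∈ pathPts w := by
          simp [pathPos, Prod.ext_iff, add_comm]
        rw [hpred, ih]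
        simp [northCols, List.countP_map, Function.comp_def, Prod.ext_iff]
    | N =>
      cases y with
      | zero => cases x <;> simp [pathPos, northCols, Prod.ext_iff]
      | succ y =>
        have hpred : (∃ z' ∈ pathPts w, pathPos [Step.N] + z' = (x, y + 1)) ↔
            (x, y) ∈ pathPts w := by
          simp [pathPos, Prod.ext_iff, add_comm]
        rw [hpred, ih]
        cases x <;> simp [northCols, Prod.ext_iff]

/-! ### Polyominoes of height three -/

lemma eastTarget_eq {h : ℕ → ℕ} {m x y z : ℕ} (hzm : z ≤ m)
    (hlt : ∀ i, x ≤ i → i < z → h i < y) (hz : z < m → x ≤ z ∧ y ≤ h z) :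
    eastTarget h m x y = z := by
  obtain ⟨k, rfl⟩ := Nat.exists_eq_add_of_le hzm
  have hbefore : (List.range z).filter (fun i => decide (x ≤ i ∧ y ≤ h i)) = [] := by
    refine List.filter_eq_nil_iff.2 fun i hi hxy => ?_
    obtain ⟨hxi, hyi⟩ := of_decide_eq_true hxy
    exact (hlt i hxi (List.mem_range.1 hi)).not_ge hyi
  rw [eastTarget, List.range_add, List.filter_append, hbefore, List.nil_append]
  cases k with
  | zero => rfl
  | succ k =>
    have hhit : decide (x ≤ z ∧ y ≤ h z) = true := decide_eq_true (hz (by omega))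
    rw [List.range_succ_eq_map, List.map_cons, add_zero, List.filter_cons, if_pos hhit,
      List.headD_cons]

lemma bounceAux_end (hU hL : ℕ → ℕ) (m n fuel j : ℕ) : bounceAux hU hL m n fuel m n j = 0 := by
  cases fuel with
  | zero => rfl
  | succ fuel => exact if_pos ⟨rfl, rfl⟩

lemma bounceAux_last {hU hL : ℕ → ℕ} {m n fuel x y j : ℕ} (hy : y < n) (hceil : hU (x - 1) = n) :
    bounceAux hU hL m n (fuel + 1) x y j = (j + 1) * (n - y + (m - x)) := by
  rw [bounceAux, if_neg fun h => hy.ne h.2]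
  simp only [hceil, if_true, bounceAux_end, add_zero]

lemma bounceAux_step {hU hL : ℕ → ℕ} {m n fuel x y j x' y' : ℕ} (hy : y < n)
    (hceil : hU (x - 1) = y') (hy' : y' < n) (hfloor : eastTarget hL m x y' = x') :
    bounceAux hU hL m n (fuel + 1) x y j =
      (j + 1) * (y' - y + (x' - x)) + bounceAux hU hL m n fuel x' y' (j + 1) := by
  rw [bounceAux, if_neg fun h => hy.ne h.2]
  simp only [hceil, hy'.ne, if_false, hfloor]

lemma colHeight_of_northCols_eq {w : List Step} {a b c i : ℕ} (h : northCols w = [a, b, c])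
    (hi : i < countE w) : colHeight w i =
      (if a ≤ i then 1 else 0) + (if b ≤ i then 1 else 0) + if c ≤ i then 1 else 0 := by
  rw [colHeight_eq_countP hi, h]
  simp only [List.countP_cons, List.countP_nil, decide_eq_true_eq]
  omega

lemma mem_pathPts_of_northCols_eq {w : List Step} {a b c x y : ℕ} (h : northCols w = [a, b, c]) :
    (x, y) ∈ pathPts w ↔ (y = 0 ∧ x ≤ a) ∨ (y = 1 ∧ a ≤ x ∧ x ≤ b) ∨
      (y = 2 ∧ b ≤ x ∧ x ≤ c) ∨ (y = 3 ∧ c ≤ x ∧ x ≤ countE w) := by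
  have hsorted := pairwise_northCols w
  have hc : c ≤ countE w := le_countE_of_mem_northCols (by simp [h])
  simp only [h, List.pairwise_cons, List.mem_cons, List.not_mem_nil, forall_eq_or_imp] at hsorted
  rw [mem_pathPts, h]
  simp only [List.countP_cons, List.countP_nil, decide_eq_true_eq]
  split_ifs <;> omega

/-- The extents of the rows of a polyomino in `PP(m, 3)`, where `0 < m`: from bottom to top
the rows are the intervals `[0, r]`, `[p, s]` and `[q, m]`. -/
@[ext]
structure ThreeRows (m : ℕ) where
  p : ℕ
  q : ℕ
  r : ℕ
  s : ℕ
  valid : p ≤ q ∧ r ≤ s ∧ s ≤ m ∧ p < r ∧ q < s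

lemma exists_northCols_eq {w : List Step} (h : countN w = 3) : ∃ a b c,
    northCols w = [a, b, c] ∧ a ≤ b ∧ b ≤ c ∧ c ≤ countE w := by
  obtain ⟨a, b, c, hcols⟩ := List.length_eq_three.1 ((length_northCols w).trans h)
  have hsorted := pairwise_northCols w
  have hc : c ≤ countE w := le_countE_of_mem_northCols (by simp [hcols])
  simp only [hcols, List.pairwise_cons, List.mem_cons, List.not_mem_nil, forall_eq_or_imp]
    at hsorted
  exact ⟨a, b, c, hcols, hsorted.1.1, hsorted.2.1.1, hc⟩

lemma exists_threeRows_northCols {m : ℕ} (hm : 0 < m) (P : Polyomino m 3) : ∃ t : ThreeRows m,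
    northCols P.upper = [0, t.p, t.q] ∧ northCols P.lower = [t.r, t.s, m] := by
  obtain ⟨x, p, q, hU, hxp, hpq, hqm⟩ := exists_northCols_eq P.upperN
  obtain ⟨r, s, y, hL, hrs, hsy, hym⟩ := exists_northCols_eq P.lowerN
  rw [P.upperE] at hqm
  rw [P.lowerE] at hym
  have habove : ∀ i < m, (if r ≤ i then 1 else 0) + (if s ≤ i then 1 else 0) +
      (if y ≤ i then 1 else 0) ≤ (if x ≤ i then 1 else 0) + (if p ≤ i then 1 else 0) +
      if q ≤ i then 1 else 0 := fun i hi => by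
    have := P.above i hi
    rwa [colHeight_of_northCols_eq hL (P.lowerE.symm ▸ hi),
      colHeight_of_northCols_eq hU (P.upperE.symm ▸ hi)] at this
  have hmeet : ∀ x y, (x, y) ∈ pathPts P.upper ∧ (x, y) ∈ pathPts P.lower →
      (x = 0 ∧ y = 0) ∨ (x = m ∧ y = 3) := fun x y h => by
    simpa only [P.meet, Finset.mem_insert, Finset.mem_singleton, Prod.mk.injEq]
      using Finset.mem_inter.2 h
  simp only [mem_pathPts_of_northCols_eq hU, mem_pathPts_of_northCols_eq hL, P.upperE, P.lowerE]
    at hmeet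
  have hx : x = 0 := by
    have hstart := habove 0 hm
    have := hmeet 1 0
    split_ifs at hstart <;> omega
  have hy : y = m := by
    have hend := habove (m - 1) (by omega)
    have := hmeet (m - 1) 3
    split_ifs at hend <;> omega
  have hpr : p < r := by
    have := hmeet r 1
    omega
  have hqs : q < s := by
    by_contra hsq
    have hcross := habove s
    have := hmeet (max p s) 2
    split_ifs at hcross <;> omega
  exact ⟨⟨p, q, r, s, hpq, hrs, hy ▸ hsy, hpr, hqs⟩, hx ▸ hU, hy ▸ hL⟩

namespace ThreeRows

variable {m : ℕ} (t : ThreeRows m)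

/-- The upper boundary path of the rows. -/
def upperPath : List Step := pathFrom m 0 [0, t.p, t.q]

/-- The lower boundary path of the rows. -/
def lowerPath : List Step := pathFrom m 0 [t.r, t.s, m]

lemma northCols_upperPath : northCols t.upperPath = [0, t.p, t.q] := by
  have := t.valid
  rw [upperPath, northCols_pathFrom m (by grind)]
  rfl

lemma northCols_lowerPath : northCols t.lowerPath = [t.r, t.s, m] := by
  have := t.valid
  rw [lowerPath, northCols_pathFrom m (by grind)]
  rfl

lemma countE_upperPath : countE t.upperPath = m := by
  have := t.valid
  exact countE_pathFrom (by grind) (by grind)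

lemma countE_lowerPath : countE t.lowerPath = m := by
  have := t.valid
  exact countE_pathFrom (by grind) (by grind)

lemma colHeight_upperPath {i : ℕ} (hi : i < m) : colHeight t.upperPath i =
    1 + (if t.p ≤ i then 1 else 0) + if t.q ≤ i then 1 else 0 := by
  rw [colHeight_of_northCols_eq t.northCols_upperPath (t.countE_upperPath.symm ▸ hi),
    if_pos (Nat.zero_le i)]

lemma colHeight_lowerPath {i : ℕ} (hi : i < m) : colHeight t.lowerPath i =
    (if t.r ≤ i then 1 else 0) + if t.s ≤ i then 1 else 0 := by
  rw [colHeight_of_northCols_eq t.northCols_lowerPath (t.countE_lowerPath.symm ▸ hi),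
    if_neg hi.not_ge, add_zero]

lemma colHeight_lowerPath_le {i : ℕ} (hi : i < m) :
    colHeight t.lowerPath i ≤ colHeight t.upperPath i := by
  have := t.valid
  rw [t.colHeight_lowerPath hi, t.colHeight_upperPath hi]
  split_ifs <;> omega

lemma pathPts_inter_pathPts :
    pathPts t.upperPath ∩ pathPts t.lowerPath = {(0, 0), (m, 3)} := by
  have := t.valid
  ext ⟨x, y⟩
  rw [Finset.mem_inter, mem_pathPts_of_northCols_eq t.northCols_upperPath,
    mem_pathPts_of_northCols_eq t.northCols_lowerPath, countE_upperPath, countE_lowerPath]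
  simp only [Finset.mem_insert, Finset.mem_singleton, Prod.mk.injEq]
  omega

/-- The polyomino with the given rows. -/
def toPolyomino : Polyomino m 3 where
  lower := t.lowerPath
  upper := t.upperPath
  lowerE := t.countE_lowerPath
  lowerN := by rw [← length_northCols, northCols_lowerPath]; rfl
  upperE := t.countE_upperPath
  upperN := by rw [← length_northCols, northCols_upperPath]; rfl
  above _ hi := t.colHeight_lowerPath_le hi
  meet := t.pathPts_inter_pathPts

lemma toPolyomino_injective : Function.Injective (toPolyomino (m := m)) := by
  intro t t' h
  have hU : [0, t.p, t.q] = [0, t'.p, t'.q] := by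
    rw [← northCols_upperPath, ← northCols_upperPath]
    exact congrArg (northCols ∘ Polyomino.upper) h
  have hL : [t.r, t.s, m] = [t'.r, t'.s, m] := by
    rw [← northCols_lowerPath, ← northCols_lowerPath]
    exact congrArg (northCols ∘ Polyomino.lower) h
  simp only [List.cons.injEq, and_true, true_and] at hU hL
  exact ThreeRows.ext hU.1 hU.2 hL.1 hL.2

lemma toPolyomino_surjective (hm : 0 < m) : Function.Surjective (toPolyomino (m := m)) := by
  intro P
  obtain ⟨t, hU, hL⟩ := exists_threeRows_northCols hm P
  have hupper : t.upperPath = P.upper :=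
    eq_of_northCols_eq (t.countE_upperPath.trans P.upperE.symm)
      (t.northCols_upperPath.trans hU.symm)
  have hlower : t.lowerPath = P.lower :=
    eq_of_northCols_eq (t.countE_lowerPath.trans P.lowerE.symm)
      (t.northCols_lowerPath.trans hL.symm)
  refine ⟨t, ?_⟩
  cases P
  simp only [toPolyomino, Polyomino.mk.injEq]
  exact ⟨hlower, hupper⟩

/-- A polyomino of height `3` amounts to its three rows. -/
noncomputable def equivPolyomino (hm : 0 < m) : ThreeRows m ≃ Polyomino m 3 :=
  Equiv.ofBijective toPolyomino ⟨toPolyomino_injective, toPolyomino_surjective hm⟩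

/-- The area of the polyomino with the given rows. -/
def area : ℕ := t.r + t.s - (t.p + t.q) - 2

/-- The bounce of the polyomino with the given rows. The cases are the possible sequences of
heights of the turns of the bounce path from north to east: `3`; `2, 3`; `1, 3`; `1, 2, 3`. -/
def bounce : ℕ :=
  if t.p = 0 then
    if t.q = 0 then 0 else m + 1 - t.s
  else if t.q < t.r then m + 2 - t.r
  else 2 * m + 3 - t.r - t.s

lemma area_toPolyomino : QtN.area t.toPolyomino = t.area := by
  have := t.valid
  rw [area_eq, toPolyomino, northCols_upperPath, northCols_lowerPath, area]
  simp only [List.sum_cons, List.sum_nil]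
  omega

lemma eastTarget_one (hp : 0 < t.p) : eastTarget (colHeight t.lowerPath) m 1 1 = t.r := by
  have := t.valid
  refine eastTarget_eq (by omega) (fun i _ hi => ?_) fun hr => ⟨by omega, ?_⟩
  · rw [t.colHeight_lowerPath (by omega)]
    split_ifs <;> omega
  · rw [t.colHeight_lowerPath hr]
    split_ifs <;> omega

lemma eastTarget_two {x : ℕ} (hx : x ≤ t.s) :
    eastTarget (colHeight t.lowerPath) m x 2 = t.s := by
  have := t.valid
  refine eastTarget_eq (by omega) (fun i _ hi => ?_) fun hs => ⟨hx, ?_⟩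
  · rw [t.colHeight_lowerPath (by omega)]
    split_ifs <;> omega
  · rw [t.colHeight_lowerPath hs]
    split_ifs <;> omega

lemma bounceAux_of_q_lt {fuel x y j : ℕ} (hy : y < 3) (hxm : x ≤ m) (hq : t.q < x) :
    bounceAux (colHeight t.upperPath) (colHeight t.lowerPath) m 3 (fuel + 1) x y j =
      (j + 1) * (3 - y + (m - x)) := by
  have := t.valid
  refine bounceAux_last hy ?_
  rw [t.colHeight_upperPath (by omega), if_pos (by omega), if_pos (by omega)]

lemma bounceAux_of_p_lt_of_le_q {fuel x y j : ℕ} (hy : y ≤ 2) (hp : t.p < x) (hq : x ≤ t.q) :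
    bounceAux (colHeight t.upperPath) (colHeight t.lowerPath) m 3 (fuel + 2) x y j =
      (j + 1) * (2 - y + (t.s - x)) + (j + 2) * (1 + (m - t.s)) := by
  have := t.valid
  have htwo : colHeight t.upperPath (x - 1) = 2 := by
    rw [t.colHeight_upperPath (by omega), if_pos (by omega), if_neg (by omega)]
  rw [bounceAux_step (by omega) htwo (by omega) (t.eastTarget_two (by omega)),
    t.bounceAux_of_q_lt (by omega) (by omega) (by omega)]

lemma bounceAux_of_pos_p {fuel : ℕ} (hp : 0 < t.p) :
    bounceAux (colHeight t.upperPath) (colHeight t.lowerPath) m 3 (fuel + 1) 1 0 0 =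
      t.r + bounceAux (colHeight t.upperPath) (colHeight t.lowerPath) m 3 fuel t.r 1 1 := by
  have := t.valid
  have hone : colHeight t.upperPath (1 - 1) = 1 := by
    rw [t.colHeight_upperPath (by omega), if_neg (by omega), if_neg (by omega)]
  rw [bounceAux_step (by omega) hone (by omega) (t.eastTarget_one hp), zero_add, one_mul]
  omega

lemma bounce_toPolyomino : QtN.bounce t.toPolyomino = t.bounce := by
  have := t.valid
  change bounceAux (colHeight t.upperPath) (colHeight t.lowerPath) m 3 (m + 5) 1 0 0 -
    (m + 2) = t.bounce
  rw [bounce]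
  split_ifs with hp hq hqr
  · rw [t.bounceAux_of_q_lt (by omega) (by omega) (by omega)]
    omega
  · rw [t.bounceAux_of_p_lt_of_le_q (by omega) (by omega) (by omega)]
    omega
  · rw [t.bounceAux_of_pos_p (by omega), t.bounceAux_of_q_lt (by omega) (by omega) (by omega)]
    omega
  · rw [t.bounceAux_of_pos_p (by omega),
      t.bounceAux_of_p_lt_of_le_q (by omega) (by omega) (by omega)]
    omega

end ThreeRows

/-! ### From arcs to rows -/

variable {m : ℕ}

/-- The bijection from `NC (m + 2) 3` to `PP(m, 3)`, in terms of arcs and rows. A leap `0` goes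
to the rows with `p = q = 0`, nested arcs with `c ≤ a + 2` go to `p = 0 < q`, the other nested
arcs go to `0 < p` and `q < r`, and disjoint arcs go to `r ≤ q`; the disjoint arcs with
`c = b + 1` are the exception, they fill up the class `0 < p`, `q < r`. In each class the formula
for the bounce dictates the value of one row end (`s` if `p = 0`, otherwise `r`). -/
def ArcPair.toThreeRows : ArcPair (m + 2) → ThreeRows m
  | ⟨a, b, c, d, h⟩ =>
    if hdisjoint : b < c then
      if hadjacent : b + 1 = c then ⟨m + 3 - d, m + 2 - c, m + 3 - c, m + 1 - a, by omega⟩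
      else ⟨m + 3 - d, m + 2 + a - c, m + 3 - c, m + 2 + b - c, by omega⟩
    else if hc : c = 2 then ⟨0, 0, d - 2, b - 2, by omega⟩
    else if hac : c = a + 1 then ⟨0, m + 3 - b, d - c, m + 3 - c, by omega⟩
    else if hac' : c = a + 2 then ⟨0, m + 3 - d, b + 1 - c, m + 3 - c, by omega⟩
    else ⟨m + 3 - b, m + 3 - d, m + 4 - c, m + 1 - a, by omega⟩

/-- The inverse of `ArcPair.toThreeRows`. In the class `p = 0 < q`, the arcs satisfy `c = a + 1`
if `r + q ≤ s`, and `c = a + 2` otherwise. -/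
def ThreeRows.toArcPair : ThreeRows m → ArcPair (m + 2)
  | ⟨p, q, r, s, h⟩ =>
    if hp : p = 0 then
      if hq : q = 0 then ⟨1, s + 2, 2, r + 2, by omega⟩
      else if hrq : r + q ≤ s then ⟨m + 2 - s, m + 3 - q, m + 3 - s, r + (m + 3 - s), by omega⟩
      else ⟨m + 1 - s, r + (m + 2 - s), m + 3 - s, m + 3 - q, by omega⟩
    else if hqr : r ≤ q then ⟨q + 1 - r, s + 1 - r, m + 3 - r, m + 3 - p, by omega⟩
    else if hqr' : r = q + 1 then ⟨m + 1 - s, m + 2 - r, m + 3 - r, m + 3 - p, by omega⟩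
    else ⟨m + 1 - s, m + 3 - p, m + 4 - r, m + 3 - q, by omega⟩

lemma ArcPair.toArcPair_toThreeRows (t : ArcPair (m + 2)) : t.toThreeRows.toArcPair = t := by
  obtain ⟨a, b, c, d, h⟩ := t
  simp only [ArcPair.toThreeRows]
  split_ifs <;> simp only [ThreeRows.toArcPair] <;> split_ifs <;>
    simp only [ArcPair.mk.injEq] <;> omega

lemma ThreeRows.toThreeRows_toArcPair (t : ThreeRows m) : t.toArcPair.toThreeRows = t := by
  obtain ⟨p, q, r, s, h⟩ := t
  simp only [ThreeRows.toArcPair]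
  split_ifs <;> simp only [ArcPair.toThreeRows] <;> split_ifs <;>
    simp only [ThreeRows.mk.injEq] <;> omega

/-- `ArcPair.toThreeRows` as an equivalence; it carries the area to the area and the leap to the
bounce. -/
def ArcPair.equivThreeRows : ArcPair (m + 2) ≃ ThreeRows m where
  toFun := ArcPair.toThreeRows
  invFun := ThreeRows.toArcPair
  left_inv := ArcPair.toArcPair_toThreeRows
  right_inv := ThreeRows.toThreeRows_toArcPair

lemma ArcPair.area_toThreeRows (t : ArcPair (m + 2)) : t.toThreeRows.area = t.area := by
  obtain ⟨a, b, c, d, h⟩ := t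
  simp only [ArcPair.toThreeRows, ArcPair.area]
  split_ifs <;> simp only [ThreeRows.area] <;> omega

lemma ArcPair.bounce_toThreeRows (t : ArcPair (m + 2)) : t.toThreeRows.bounce = t.leap := by
  obtain ⟨a, b, c, d, h⟩ := t
  simp only [ArcPair.toThreeRows, ArcPair.leap]
  split_ifs <;> simp only [ThreeRows.bounce] <;> split_ifs <;> omega

/-- The pair (area, leap) is a combinatorial interpretation of `N_{n,3}(q,t)`:
for all `n ≥ 3` and `u v`, the number of `π ∈ NC(n,3)` with `area π = u` and
`leap π = v` equals the number of `P ∈ PP(n-2,3)` with `area P = u`, `bounce P = v`. -/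
theorem area_leap_pair (n u v : ℕ) (hn : 3 ≤ n) :
    Nat.card {π : NC n 3 // ncArea π.val.blocks = u ∧ leap π.val.blocks = v} =
    Nat.card {P : Polyomino (n - 2) 3 // area P = u ∧ bounce P = v} := by
  obtain ⟨m, rfl⟩ := Nat.exists_eq_add_of_le' (by omega : 2 ≤ n)
  calc Nat.card {π : NC (m + 2) 3 // ncArea π.val.blocks = u ∧ leap π.val.blocks = v}
      = Nat.card {t : ArcPair (m + 2) // t.area = u ∧ t.leap = v} :=
        (Nat.card_congr <| (ArcPair.equivNC hn).subtypeEquiv fun t => by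
          rw [← t.ncArea_toSetPartition, ← t.leap_toSetPartition]
          rfl).symm
    _ = Nat.card {t : ThreeRows m // t.area = u ∧ t.bounce = v} :=
        Nat.card_congr <| ArcPair.equivThreeRows.subtypeEquiv fun t => by
          rw [← t.area_toThreeRows, ← t.bounce_toThreeRows]
          rfl
    _ = Nat.card {P : Polyomino m 3 // area P = u ∧ bounce P = v} :=
        Nat.card_congr <| (ThreeRows.equivPolyomino (by omega)).subtypeEquiv fun t => by
          rw [← t.area_toPolyomino, ← t.bounce_toPolyomino]
          rfl

end QtN
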